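/- Theorem 6.1(v): with the notation of the context, for every hermitian matrix u one has (2/n)·Σ_α 𝓛_{e_α,u}·𝒳_{e_α} = −𝒳_u·𝓛_e + 𝓛_u·𝒳_e and (2/n)·Σ_α 𝓛_{e_α,u}·𝒴_{e_α} = 𝒴_u·𝓛_e − 𝓛_u·𝒴_e. -/

import Mathlib

open Matrix
open scoped ComplexOrder

/-- The Jordan product of two complex matrices. -/
noncomputable def jordanProd {n : ℕ} (a b : Matrix (Fin n) (Fin n) ℂ) :
    Matrix (Fin n) (Fin n) ℂ :=
  (1 / 2 : ℂ) • (a * b + b * a)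

/-- The Jordan triple product `{uvw} = u∘(v∘w) − v∘(u∘w) + (u∘v)∘w`. -/
noncomputable def jTriple {n : ℕ} (u v w : Matrix (Fin n) (Fin n) ℂ) :
    Matrix (Fin n) (Fin n) ℂ :=
  jordanProd u (jordanProd v w) - jordanProd v (jordanProd u w)
    + jordanProd (jordanProd u v) w

/-- The real inner product `⟨u|v⟩ = (1/n)·Re(tr(u·v))`. -/
noncomputable def jInner {n : ℕ} (u v : Matrix (Fin n) (Fin n) ℂ) : ℝ :=
  (1 / n : ℝ) * ((u * v).trace).re

/-- `𝒴_u = ⟨u|x⟩`. -/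
noncomputable def Yfun {n : ℕ} (x u : Matrix (Fin n) (Fin n) ℂ) : ℝ :=
  jInner u x

/-- `𝓛_u = ⟨u∘x|π⟩`. -/
noncomputable def Lfun {n : ℕ} (x p u : Matrix (Fin n) (Fin n) ℂ) : ℝ :=
  jInner (jordanProd u x) p

/-- `𝓛_{u,v} = ⟨u∘(v∘x) − v∘(u∘x)|π⟩ − μ·i·tr(x·[u,v])/(2·tr x)`. -/
noncomputable def LLfun {n : ℕ} (μ : ℝ) (x p u v : Matrix (Fin n) (Fin n) ℂ) : ℝ :=
  jInner (jordanProd u (jordanProd v x) - jordanProd v (jordanProd u x)) p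
    - μ * (Complex.I * (x * (u * v - v * u)).trace).re / (2 * (x.trace).re)

/-- `𝒳_u = ⟨x|{πuπ}⟩ + n·μ²·Re(tr(x·u))/(tr x)² − μ·i·tr(x·[u,π])/(tr x)`. -/
noncomputable def Xfun {n : ℕ} (μ : ℝ) (x p u : Matrix (Fin n) (Fin n) ℂ) : ℝ :=
  jInner x (jTriple p u p) + (n : ℝ) * μ ^ 2 * ((x * u).trace).re / ((x.trace).re) ^ 2
    - μ * (Complex.I * (x * (u * p - p * u)).trace).re / (x.trace).re

/-!
Let `z = π + i (n μ / tr x) e`. Then `𝒴`, `2𝓛` and `𝒳` are the pairings of `u` with `x`,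
`x z* + z x` and `z x z*`, while `4𝓛_{a,u} = ⟨[a,u] | C⟩` for `C = x z* − z x`. Invariance of the
trace form and the Parseval identity reduce the sums to `⟨u | [C, z x z*]⟩` and `⟨u | [C, x]⟩`, and
these two commutators collapse because `x a x = tr(x a) x` for a matrix `x` of rank one.
-/

section RankOne

variable {m n K : Type*} [Fintype n] [Field K]

theorem exists_eq_vecMulVec_of_rank_le_one {A : Matrix m n K} (hA : A.rank ≤ 1) :
    ∃ (v : m → K) (w : n → K), A = vecMulVec v w := by
  classical
  obtain ⟨v, hv⟩ := finrank_le_one_iff.mp hA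
  choose w hw using fun j ↦ hv ⟨A.mulVecLin (Pi.single j 1), LinearMap.mem_range_self _ _⟩
  refine ⟨v, w, Matrix.ext fun i j ↦ ?_⟩
  have hcol : w j • (v : m → K) = A.col j := by simpa using congrArg Subtype.val (hw j)
  simpa [vecMulVec_apply, mul_comm] using (congrFun hcol i).symm

theorem mul_mul_self_of_rank_le_one {x : Matrix n n K} (hx : x.rank ≤ 1) (a : Matrix n n K) :
    x * a * x = (x * a).trace • x := by
  obtain ⟨v, w, rfl⟩ := exists_eq_vecMulVec_of_rank_le_one hx
  rw [vecMulVec_mul, vecMulVec_mul_vecMulVec, trace_vecMulVec, vecMulVec_smul, dotProduct_comm]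

theorem lie_mul_sub_mul_self_of_rank_le_one {x : Matrix n n K} (hx : x.rank ≤ 1)
    (y z : Matrix n n K) :
    ⁅x * y - z * x, x⁆ = (x * y + z * x).trace • x - x.trace • (x * y + z * x) := by
  classical
  have hxx : x * x = x.trace • x := by simpa using mul_mul_self_of_rank_le_one hx 1
  calc ⁅x * y - z * x, x⁆ = x * y * x + x * z * x - (x * x * y + z * (x * x)) := by
        rw [Ring.lie_def]; noncomm_ring
    _ = ((x * y).trace • x + (x * z).trace • x) - x.trace • (x * y + z * x) := by
        simp only [mul_mul_self_of_rank_le_one hx, hxx, smul_mul_assoc, mul_smul_comm, smul_add]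
    _ = (x * y + z * x).trace • x - x.trace • (x * y + z * x) := by
        rw [trace_add, trace_mul_comm z x, add_smul]

theorem lie_mul_sub_mul_conj_of_rank_le_one {x : Matrix n n K} (hx : x.rank ≤ 1)
    (y z : Matrix n n K) :
    ⁅x * y - z * x, z * x * y⁆ =
      (z * x * y).trace • (x * y + z * x) - (x * y + z * x).trace • (z * x * y) :=
  calc ⁅x * y - z * x, z * x * y⁆
      = (x * (y * z) * x * y + z * (x * (y * z) * x))
          - (z * (x * y * x) * y + z * (x * z * x) * y) := by
        rw [Ring.lie_def]; noncomm_ring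
    _ = (x * (y * z)).trace • (x * y + z * x)
          - ((x * y).trace • (z * x * y) + (x * z).trace • (z * x * y)) := by
        simp only [mul_mul_self_of_rank_le_one hx, smul_mul_assoc, mul_smul_comm, smul_add]
    _ = (z * x * y).trace • (x * y + z * x) - (x * y + z * x).trace • (z * x * y) := by
        rw [trace_add, trace_mul_comm z x, add_smul, mul_assoc z x y, trace_mul_comm z, mul_assoc]

end RankOne

section JordanProduct

variable {n : ℕ}

theorem isHermitian_jordanProd {a b : Matrix (Fin n) (Fin n) ℂ} (ha : a.IsHermitian)
    (hb : b.IsHermitian) : (jordanProd a b).IsHermitian := by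
  simp [IsHermitian, jordanProd, ha.eq, hb.eq, add_comm]

theorem jTriple_self (p u : Matrix (Fin n) (Fin n) ℂ) : jTriple p u p = p * u * p := by
  simp only [jTriple, jordanProd, mul_add, add_mul, smul_add, mul_smul_comm, smul_mul_assoc,
    mul_assoc]
  module

theorem jordanProd_jordanProd_sub (u v x : Matrix (Fin n) (Fin n) ℂ) :
    jordanProd u (jordanProd v x) - jordanProd v (jordanProd u x) = (1 / 4 : ℝ) • ⁅⁅u, v⁆, x⁆ := by
  simp only [jordanProd, Ring.lie_def, mul_add, add_mul, mul_sub, sub_mul, smul_add,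
    mul_smul_comm, smul_mul_assoc, mul_assoc]
  module

end JordanProduct

section TraceForm

variable {n : ℕ}

theorem jInner_comm (a b : Matrix (Fin n) (Fin n) ℂ) : jInner a b = jInner b a := by
  rw [jInner, trace_mul_comm, jInner]

theorem jInner_add_right (u a b : Matrix (Fin n) (Fin n) ℂ) :
    jInner u (a + b) = jInner u a + jInner u b := by
  simp [jInner, mul_add]

theorem jInner_sub_right (u a b : Matrix (Fin n) (Fin n) ℂ) :
    jInner u (a - b) = jInner u a - jInner u b := by
  simp [jInner, mul_sub]

theorem jInner_smul_right (u : Matrix (Fin n) (Fin n) ℂ) (r : ℝ) (a : Matrix (Fin n) (Fin n) ℂ) :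
    jInner u (r • a) = r * jInner u a := by
  simp [jInner, mul_left_comm]

theorem jInner_lie_left (a b c : Matrix (Fin n) (Fin n) ℂ) :
    jInner ⁅a, b⁆ c = jInner a ⁅b, c⁆ := by
  have hcycle : (b * (a * c)).trace = (a * (c * b)).trace := by
    rw [trace_mul_comm, mul_assoc]
  simp only [jInner, Ring.lie_def, sub_mul, mul_sub, trace_sub, hcycle, mul_assoc]

theorem re_trace_mul [NeZero n] (a b : Matrix (Fin n) (Fin n) ℂ) :
    (a * b).trace.re = n * jInner a b := by
  rw [jInner, one_div, mul_inv_cancel_left₀ (NeZero.ne _)]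

theorem re_I_mul_trace_mul [NeZero n] (a b : Matrix (Fin n) (Fin n) ℂ) :
    (Complex.I * (a * b).trace).re = n * jInner b (Complex.I • a) := by
  rw [← re_trace_mul, mul_smul_comm, trace_smul, smul_eq_mul, trace_mul_comm]

theorem trace_smul_of_isHermitian [NeZero n] {a : Matrix (Fin n) (Fin n) ℂ} (ha : a.IsHermitian)
    (b : Matrix (Fin n) (Fin n) ℂ) : a.trace • b = (n * jInner 1 a) • b := by
  have hreal : (a.trace.re : ℂ) = a.trace :=
    Complex.conj_eq_iff_re.mp <| by rw [starRingEnd_apply, ← trace_conjTranspose, ha.eq]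
  rw [← re_trace_mul, one_mul, ← Complex.coe_smul, hreal]

theorem sum_jInner_mul_jInner {ι : Type*} [Fintype ι] {E : ι → Matrix (Fin n) (Fin n) ℂ}
    {b : Matrix (Fin n) (Fin n) ℂ} (hb : b = ∑ α, (jInner (E α) b : ℂ) • E α)
    (a : Matrix (Fin n) (Fin n) ℂ) :
    ∑ α, jInner (E α) a * jInner (E α) b = jInner a b := by
  have hsum (c : ι → ℝ) : jInner a (∑ α, (c α : ℂ) • E α) = ∑ α, c α * jInner a (E α) := by
    simp [jInner, Finset.mul_sum, mul_left_comm]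
  rw [hb, hsum, ← hb]
  exact Finset.sum_congr rfl fun α _ ↦ by rw [jInner_comm a, mul_comm]

end TraceForm

section ShiftedMomentum

variable {n : ℕ}

/-- The non-hermitian matrix `z = π + i (n μ / tr x) e`, through which `𝓛` and `𝒳` are expressed
as trace pairings. Real scalars act by the real scalar action, for which `jInner` is bilinear. -/
noncomputable def shiftedMomentum (μ : ℝ) (x p : Matrix (Fin n) (Fin n) ℂ) :
    Matrix (Fin n) (Fin n) ℂ :=
  p + (n * μ / x.trace.re : ℝ) • Complex.I • 1

theorem conjTranspose_shiftedMomentum (μ : ℝ) (x : Matrix (Fin n) (Fin n) ℂ)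
    {p : Matrix (Fin n) (Fin n) ℂ} (hp : p.IsHermitian) :
    (shiftedMomentum μ x p)ᴴ = p - (n * μ / x.trace.re : ℝ) • Complex.I • 1 := by
  simp [shiftedMomentum, hp.eq, sub_eq_add_neg]

theorem Lfun_eq_jInner (μ : ℝ) (x u : Matrix (Fin n) (Fin n) ℂ)
    {p : Matrix (Fin n) (Fin n) ℂ} (hp : p.IsHermitian) :
    Lfun x p u =
      1 / 2 * jInner u (x * (shiftedMomentum μ x p)ᴴ + shiftedMomentum μ x p * x) := by
  have hanti : x * (shiftedMomentum μ x p)ᴴ + shiftedMomentum μ x p * x = x * p + p * x := by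
    rw [conjTranspose_shiftedMomentum μ x hp, shiftedMomentum]
    simp [mul_sub, add_mul]
  have hcycle : (x * (u * p)).trace = (u * (p * x)).trace := by
    rw [trace_mul_comm, mul_assoc]
  have htrace : (jordanProd u x * p).trace = (1 / 2 : ℝ) * (u * (x * p + p * x)).trace := by
    simp [jordanProd, add_mul, mul_add, hcycle, mul_assoc]
  rw [hanti, Lfun, jInner, htrace, Complex.re_ofReal_mul, jInner, mul_left_comm]

theorem LLfun_eq_jInner [NeZero n] (μ : ℝ) (x u v : Matrix (Fin n) (Fin n) ℂ)
    {p : Matrix (Fin n) (Fin n) ℂ} (hp : p.IsHermitian) :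
    LLfun μ x p u v =
      1 / 4 * jInner ⁅u, v⁆ (x * (shiftedMomentum μ x p)ᴴ - shiftedMomentum μ x p * x) := by
  have hcomm : x * (shiftedMomentum μ x p)ᴴ - shiftedMomentum μ x p * x
      = ⁅x, p⁆ - (2 * (n * μ / x.trace.re)) • Complex.I • x := by
    rw [conjTranspose_shiftedMomentum μ x hp, shiftedMomentum, Ring.lie_def]
    simp only [mul_sub, add_mul, mul_smul_comm, smul_mul_assoc, mul_one, one_mul]
    module
  rw [LLfun, jordanProd_jordanProd_sub, jInner_comm _ p, jInner_smul_right, jInner_comm p,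
    jInner_lie_left _ x, ← Ring.lie_def, re_I_mul_trace_mul, hcomm, jInner_sub_right,
    jInner_smul_right]
  ring

theorem Xfun_eq_jInner [NeZero n] (μ : ℝ) (x u : Matrix (Fin n) (Fin n) ℂ)
    {p : Matrix (Fin n) (Fin n) ℂ} (hp : p.IsHermitian) :
    Xfun μ x p u = jInner u (shiftedMomentum μ x p * x * (shiftedMomentum μ x p)ᴴ) := by
  have hconj : shiftedMomentum μ x p * x * (shiftedMomentum μ x p)ᴴ
      = p * x * p + (n * μ / x.trace.re) ^ 2 • x
        - (n * μ / x.trace.re) • ⁅p, Complex.I • x⁆ := by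
    rw [conjTranspose_shiftedMomentum μ x hp, shiftedMomentum, Ring.lie_def]
    have hI : Complex.I • Complex.I • x = -x := by rw [smul_smul, Complex.I_mul_I, neg_one_smul]
    simp only [mul_sub, add_mul, mul_smul_comm, smul_mul_assoc, mul_one, one_mul, smul_add,
      smul_comm Complex.I (_ : ℝ), hI]
    module
  have hcycle : jInner x (p * u * p) = jInner u (p * x * p) := by
    rw [jInner, jInner, ← mul_assoc, trace_mul_comm, ← mul_assoc, ← mul_assoc, trace_mul_comm,
      mul_assoc p x p]
  rw [Xfun, jTriple_self, hcycle, ← Ring.lie_def, re_I_mul_trace_mul, jInner_lie_left,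
    re_trace_mul, jInner_comm x u, hconj, jInner_sub_right, jInner_add_right, jInner_smul_right,
    jInner_smul_right]
  ring

theorem sum_LLfun_mul_jInner [NeZero n] {ι : Type*} [Fintype ι]
    {E : ι → Matrix (Fin n) (Fin n) ℂ} (μ : ℝ) (x u : Matrix (Fin n) (Fin n) ℂ)
    {p b : Matrix (Fin n) (Fin n) ℂ} (hp : p.IsHermitian)
    (hb : b = ∑ α, (jInner (E α) b : ℂ) • E α) :
    ∑ α, LLfun μ x p (E α) u * jInner (E α) b =
      1 / 4 * jInner u ⁅x * (shiftedMomentum μ x p)ᴴ - shiftedMomentum μ x p * x, b⁆ := by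
  simp only [LLfun_eq_jInner μ x _ u hp, jInner_lie_left, mul_assoc]
  rw [← Finset.mul_sum, sum_jInner_mul_jInner hb, jInner_lie_left]

end ShiftedMomentum

theorem quadratic_relation_v_general {n : ℕ} {ι : Type*} [Fintype ι] (μ : ℝ)
    {x p : Matrix (Fin n) (Fin n) ℂ} (hx : x.IsHermitian) (hrank : x.rank = 1)
    (hp : p.IsHermitian) {E : ι → Matrix (Fin n) (Fin n) ℂ}
    (hE : ∀ u : Matrix (Fin n) (Fin n) ℂ, u.IsHermitian →
      u = ∑ α, (jInner (E α) u : ℂ) • E α)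
    (u : Matrix (Fin n) (Fin n) ℂ) :
    (2 / (n : ℝ)) * (∑ α, LLfun μ x p (E α) u * Xfun μ x p (E α))
      = -(Xfun μ x p u * Lfun x p 1) + Lfun x p u * Xfun μ x p 1 ∧
    (2 / (n : ℝ)) * (∑ α, LLfun μ x p (E α) u * Yfun x (E α))
      = Yfun x u * Lfun x p 1 - Lfun x p u * Yfun x 1 := by
  have : NeZero n := ⟨by rintro rfl; simpa [hrank] using x.rank_le_height⟩
  have hn : (n : ℝ) ≠ 0 := NeZero.ne _
  have hL (v) := Lfun_eq_jInner μ x v hp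
  simp only [Xfun_eq_jInner μ x _ hp, hL, Yfun]
  have hconj := isHermitian_mul_mul_conjTranspose (shiftedMomentum μ x p) hx
  have hanti :
      (x * (shiftedMomentum μ x p)ᴴ + shiftedMomentum μ x p * x).IsHermitian := by
    simp [IsHermitian, hx.eq, add_comm]
  constructor
  · rw [sum_LLfun_mul_jInner μ x u hp (hE _ hconj),
      lie_mul_sub_mul_conj_of_rank_le_one hrank.le, trace_smul_of_isHermitian hconj,
      trace_smul_of_isHermitian hanti, jInner_sub_right, jInner_smul_right, jInner_smul_right]
    field_simp
    ring
  · rw [sum_LLfun_mul_jInner μ x u hp (hE _ hx), lie_mul_sub_mul_self_of_rank_le_one hrank.le,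
      trace_smul_of_isHermitian hanti, trace_smul_of_isHermitian hx, jInner_sub_right,
      jInner_smul_right, jInner_smul_right]
    field_simp
    ring

theorem quadratic_relation_v
    (n : ℕ) (hn : 2 ≤ n) (μ : ℝ)
    (x : Matrix (Fin n) (Fin n) ℂ)
    (hherm : x.IsHermitian) (hpsd : x.PosSemidef) (hrank : x.rank = 1)
    (p w : Matrix (Fin n) (Fin n) ℂ) (hw : w.IsHermitian) (hp : p = jordanProd x w)
    (E : Fin (n ^ 2) → Matrix (Fin n) (Fin n) ℂ)
    (hEherm : ∀ α, (E α).IsHermitian)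
    (hEorth : ∀ α β, jInner (E α) (E β) = if α = β then 1 else 0)
    (hEspan : ∀ u : Matrix (Fin n) (Fin n) ℂ, u.IsHermitian →
      u = ∑ α, (jInner (E α) u : ℂ) • E α)
    (u : Matrix (Fin n) (Fin n) ℂ) (hu : u.IsHermitian)
    :
    (2 / (n : ℝ)) * (∑ α, LLfun μ x p (E α) u * Xfun μ x p (E α))
      = -(Xfun μ x p u * Lfun x p 1) + Lfun x p u * Xfun μ x p 1 ∧
    (2 / (n : ℝ)) * (∑ α, LLfun μ x p (E α) u * Yfun x (E α))
      = Yfun x u * Lfun x p 1 - Lfun x p u * Yfun x 1 := by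
  exact quadratic_relation_v_general μ hherm hrank (hp ▸ isHermitian_jordanProd hherm hw) hEspan u
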